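/- Let 𝔄 be a normed *-algebra with commuting derivations ∂₁,…,∂_d. For each n ∈ ℕ, the seminorm ‖a‖_n = ∑_{|α| ≤ n} ‖∂^α a‖ / α! is submultiplicative: ‖ab‖_n ≤ ‖a‖_n ‖b‖_n. -/

import Mathlib

/-- Iterated application ∂^α = ∂₁^{α₁} ⋯ ∂_d^{α_d} of a family of additive maps. -/
def iterD {A : Type*} [Ring A] {d : ℕ} (D : Fin d → AddMonoid.End A)
    (α : Fin d → ℕ) : AddMonoid.End A :=
  (List.ofFn (fun i => (D i) ^ (α i))).prod

/-- The seminorm ‖a‖_n = ∑_{|α| ≤ n} ‖∂^α a‖ / α!. -/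
noncomputable def diffSeminorm {A : Type*} [NormedRing A] {d : ℕ}
    (D : Fin d → AddMonoid.End A) (n : ℕ) (a : A) : ℝ :=
  ∑ α ∈ (Fintype.piFinset fun _ : Fin d => Finset.range (n + 1)).filter
      (fun α => ∑ i, α i ≤ n),
    ‖iterD D α a‖ / (∏ i, Nat.factorial (α i) : ℕ)

/-! Write `w_α(a) = ‖∂^α a‖ / α!`. Dividing the Leibniz rule
`∂^α (ab) = ∑_{β + γ = α} α! / (β! γ!) • ∂^β a ∂^γ b` by `α!` makes the multinomial factor cancel,
so that `w_α(ab) ≤ ∑_{β + γ = α} w_β(a) w_γ(b)`: the weights are dominated by a Cauchy product.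
If `|β + γ| ≤ n` then `|β| ≤ n` and `|γ| ≤ n`, so summing over `|α| ≤ n` gives only terms, each at
most once, of the product `(∑_{|β| ≤ n} w_β(a)) (∑_{|γ| ≤ n} w_γ(b))`. -/

open Finset hiding antidiagonal mem_antidiagonal
open Finset.HasAntidiagonal
open scoped Nat

theorem sum_sum_antidiagonal_mul_le {M R : Type*} [AddMonoid M] [LE M]
    [CanonicallyOrderedAdd M] [HasAntidiagonal M] [Semiring R] [PartialOrder R] [IsOrderedRing R]
    {s : Finset M} (hs : IsLowerSet (s : Set M)) {f g : M → R} (hf : 0 ≤ f) (hg : 0 ≤ g) :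
    ∑ m ∈ s, ∑ p ∈ antidiagonal m, f p.1 * g p.2 ≤ (∑ m ∈ s, f m) * ∑ m ∈ s, g m := by
  classical
  have antidiagonal_eq_fiber : ∀ m ∈ s, antidiagonal m = {p ∈ s ×ˢ s | p.1 + p.2 = m} := by
    intro m hm
    ext ⟨k, l⟩
    simp only [mem_antidiagonal, mem_filter, mem_product]
    refine ⟨?_, And.right⟩
    rintro rfl
    exact ⟨⟨hs le_self_add hm, hs le_add_self hm⟩, rfl⟩
  calc ∑ m ∈ s, ∑ p ∈ antidiagonal m, f p.1 * g p.2
      = ∑ m ∈ s, ∑ p ∈ s ×ˢ s with p.1 + p.2 = m, f p.1 * g p.2 :=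
        sum_congr rfl fun m hm ↦ by rw [antidiagonal_eq_fiber m hm]
    _ ≤ ∑ p ∈ s ×ˢ s, f p.1 * g p.2 :=
        sum_fiberwise_le_sum_of_sum_fiber_nonneg fun _ _ ↦
          sum_nonneg fun p _ ↦ mul_nonneg (hf p.1) (hg p.2)
    _ = (∑ m ∈ s, f m) * ∑ m ∈ s, g m := by rw [sum_mul_sum, sum_product]

/-- The antidiagonal `{(β, γ) | β + γ = α}` of a family `α`, such as a multi-index, obtained by
splitting every coordinate `α i` independently. -/
instance piHasAntidiagonal {ι A : Type*} [Fintype ι] [DecidableEq ι] [AddMonoid A]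
    [HasAntidiagonal A] : HasAntidiagonal (ι → A) where
  antidiagonal α := (Fintype.piFinset fun i ↦ antidiagonal (α i)).map
    (Equiv.arrowProdEquivProdArrow ι (fun _ ↦ A) (fun _ ↦ A)).toEmbedding
  mem_antidiagonal {α p} := by
    simp [mem_map_equiv, funext_iff, Equiv.arrowProdEquivProdArrow]

theorem sum_antidiagonal_fin_succ {A M : Type*} [AddMonoid A] [HasAntidiagonal A]
    [AddCommMonoid M] {d : ℕ} (α : Fin (d + 1) → A)
    (f : (Fin (d + 1) → A) × (Fin (d + 1) → A) → M) :
    ∑ p ∈ antidiagonal α, f p =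
      ∑ r ∈ antidiagonal (Fin.tail α), ∑ q ∈ antidiagonal (α 0),
        f (Fin.cons q.1 r.1, Fin.cons q.2 r.2) := by
  rw [← sum_product']
  refine sum_nbij' (fun p ↦ ((Fin.tail p.1, Fin.tail p.2), (p.1 0, p.2 0)))
    (fun x ↦ (Fin.cons x.2.1 x.1.1, Fin.cons x.2.2 x.1.2)) ?_ ?_ ?_ ?_ ?_ <;>
    simp +contextual [funext_iff, Fin.forall_fin_succ, Fin.tail]

theorem prod_choose_mul_prod_factorial_mul_prod_factorial {ι : Type*} [Fintype ι] [DecidableEq ι]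
    {α : ι → ℕ} {p : (ι → ℕ) × (ι → ℕ)} (hp : p ∈ antidiagonal α) :
    (∏ i, (α i).choose (p.1 i)) * (∏ i, (p.1 i)!) * ∏ i, (p.2 i)! = ∏ i, (α i)! := by
  obtain rfl := mem_antidiagonal.1 hp
  rw [← prod_mul_distrib, ← prod_mul_distrib]
  refine prod_congr rfl fun i _ ↦ ?_
  rw [Pi.add_apply, Nat.choose_symm_add, Nat.add_choose_mul_factorial_mul_factorial]

/-- A derivation of a possibly noncommutative ring, as an additive endomorphism satisfying the
Leibniz rule; Mathlib's `Derivation` requires a commutative domain. -/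
def IsDerivation {A : Type*} [NonUnitalNonAssocSemiring A] (δ : AddMonoid.End A) : Prop :=
  ∀ a b, δ (a * b) = δ a * b + a * δ b

theorem IsDerivation.pow_apply_mul {A : Type*} [NonUnitalNonAssocSemiring A]
    {δ : AddMonoid.End A} (hδ : IsDerivation δ) (k : ℕ) (a b : A) :
    (δ ^ k) (a * b) =
      ∑ p ∈ antidiagonal k, k.choose p.1 • ((δ ^ p.1) a * (δ ^ p.2) b) := by
  have pow_succ_apply (m : ℕ) (x : A) : (δ ^ (m + 1)) x = δ ((δ ^ m) x) := by
    rw [pow_succ', AddMonoid.End.coe_mul, Function.comp_apply]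
  induction k with
  | zero => simp
  | succ k ih =>
    rw [sum_antidiagonal_choose_succ_nsmul (fun i j ↦ (δ ^ i) a * (δ ^ j) b) k,
      pow_succ_apply, ih, map_sum, ← sum_add_distrib]
    refine sum_congr rfl fun p hp ↦ ?_
    have choose_symm : k.choose p.2 = k.choose p.1 :=
      (Nat.choose_symm_of_eq_add (mem_antidiagonal.1 hp).symm).symm
    rw [map_nsmul, hδ, smul_add, pow_succ_apply, pow_succ_apply, choose_symm, add_comm]

section IteratedDerivation

variable {A : Type*} [Ring A]

theorem iterD_succ_apply {d : ℕ} (D : Fin (d + 1) → AddMonoid.End A) (α : Fin (d + 1) → ℕ)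
    (a : A) : iterD D α a = (D 0 ^ α 0) (iterD (Fin.tail D) (Fin.tail α) a) := by
  simp [iterD, List.ofFn_succ, Fin.tail]

theorem iterD_apply_mul {d : ℕ} {D : Fin d → AddMonoid.End A} (hD : ∀ i, IsDerivation (D i))
    (α : Fin d → ℕ) (a b : A) :
    iterD D α (a * b) =
      ∑ p ∈ antidiagonal α, (∏ i, (α i).choose (p.1 i)) • (iterD D p.1 a * iterD D p.2 b) := by
  induction d with
  | zero => simp [iterD, antidiagonal]
  | succ d ih =>
    have tail_leibniz := ih (D := Fin.tail D) (fun i ↦ hD i.succ) (Fin.tail α)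
    rw [iterD_succ_apply, tail_leibniz, map_sum, sum_antidiagonal_fin_succ]
    refine sum_congr rfl fun r _ ↦ ?_
    rw [map_nsmul, (hD 0).pow_apply_mul, smul_sum]
    refine sum_congr rfl fun q _ ↦ ?_
    simp only [iterD_succ_apply, Fin.prod_univ_succ, Fin.cons_zero, Fin.cons_succ, Fin.tail_cons,
      smul_smul, Fin.tail, mul_comm]

end IteratedDerivation

section TaylorNorm

variable {A : Type*} [NormedRing A] {d : ℕ}

/-- The norm of the Taylor coefficient `∂^α a / α!`. The division takes place in `ℝ`, since `α!`
need not be invertible in `A`. -/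
noncomputable def taylorNorm (D : Fin d → AddMonoid.End A) (a : A) (α : Fin d → ℕ) : ℝ :=
  ‖iterD D α a‖ / (∏ i, (α i)! : ℕ)

theorem taylorNorm_nonneg (D : Fin d → AddMonoid.End A) (a : A) : 0 ≤ taylorNorm D a :=
  fun _ ↦ div_nonneg (norm_nonneg _) (Nat.cast_nonneg _)

theorem taylorNorm_mul_le {D : Fin d → AddMonoid.End A} (hD : ∀ i, IsDerivation (D i))
    (a b : A) (α : Fin d → ℕ) :
    taylorNorm D (a * b) α ≤
      ∑ p ∈ antidiagonal α, taylorNorm D a p.1 * taylorNorm D b p.2 := by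
  have factorial_pos (β : Fin d → ℕ) : (0 : ℝ) < (∏ i, (β i)! : ℕ) :=
    Nat.cast_pos.2 (prod_pos fun i _ ↦ (β i).factorial_pos)
  rw [taylorNorm, div_le_iff₀ (factorial_pos α), iterD_apply_mul hD, sum_mul]
  refine norm_sum_le_of_le _ fun p hp ↦ ?_
  calc ‖(∏ i, (α i).choose (p.1 i)) • (iterD D p.1 a * iterD D p.2 b)‖
      ≤ (∏ i, (α i).choose (p.1 i) : ℕ) * (‖iterD D p.1 a‖ * ‖iterD D p.2 b‖) :=
        norm_nsmul_le.trans (by gcongr; exact norm_mul_le _ _)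
    _ = taylorNorm D a p.1 * taylorNorm D b p.2 * (∏ i, (α i)! : ℕ) := by
        rw [← prod_choose_mul_prod_factorial_mul_prod_factorial hp, Nat.cast_mul, Nat.cast_mul,
          taylorNorm, taylorNorm]
        field_simp

/-- The multi-indices `α ∈ ℕ^d` with `|α| ≤ n`, in the form in which `diffSeminorm` sums over them:
the bound on the coordinates only serves to make the set finite. -/
def multiIndicesLE (d n : ℕ) : Finset (Fin d → ℕ) :=
  {α ∈ Fintype.piFinset fun _ : Fin d ↦ range (n + 1) | ∑ i, α i ≤ n}

theorem isLowerSet_multiIndicesLE (d n : ℕ) :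
    IsLowerSet (multiIndicesLE d n : Set (Fin d → ℕ)) := by
  intro α β hβα hα
  simp only [multiIndicesLE, mem_coe, mem_filter, Fintype.mem_piFinset, mem_range] at hα ⊢
  exact ⟨fun i ↦ (hβα i).trans_lt (hα.1 i), (sum_le_sum fun i _ ↦ hβα i).trans hα.2⟩

theorem diffSeminorm_eq_sum_taylorNorm (D : Fin d → AddMonoid.End A) (n : ℕ) (a : A) :
    diffSeminorm D n a = ∑ α ∈ multiIndicesLE d n, taylorNorm D a α :=
  rfl

end TaylorNorm

theorem stmt10_general {A : Type*} [NormedRing A] {d : ℕ} (D : Fin d → AddMonoid.End A)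
    (hleib : ∀ i (a b : A), D i (a * b) = D i a * b + a * D i b) (n : ℕ) (a b : A) :
    diffSeminorm D n (a * b) ≤ diffSeminorm D n a * diffSeminorm D n b := by
  simp only [diffSeminorm_eq_sum_taylorNorm]
  calc ∑ α ∈ multiIndicesLE d n, taylorNorm D (a * b) α
      ≤ ∑ α ∈ multiIndicesLE d n,
          ∑ p ∈ antidiagonal α, taylorNorm D a p.1 * taylorNorm D b p.2 :=
        sum_le_sum fun α _ ↦ taylorNorm_mul_le hleib a b α
    _ ≤ (∑ α ∈ multiIndicesLE d n, taylorNorm D a α) *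
          ∑ α ∈ multiIndicesLE d n, taylorNorm D b α :=
        sum_sum_antidiagonal_mul_le (isLowerSet_multiIndicesLE d n)
          (taylorNorm_nonneg D a) (taylorNorm_nonneg D b)

/-- for commuting derivations ∂₁,…,∂_d on a normed algebra, the
seminorm ‖a‖_n = ∑_{|α| ≤ n} ‖∂^α a‖/α! is submultiplicative. -/
theorem stmt10 {A : Type*} [NormedRing A] {d : ℕ} (D : Fin d → AddMonoid.End A)
    (hleib : ∀ i (a b : A), D i (a * b) = D i a * b + a * D i b)
    (hcomm : ∀ i j, D i * D j = D j * D i)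
    (n : ℕ) (a b : A) :
    diffSeminorm D n (a * b) ≤ diffSeminorm D n a * diffSeminorm D n b :=
  stmt10_general D hleib n a b
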